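/- Fix n ≥ 1. Let (G_m)_{m∈ℕ} be graphs on finite nonempty vertex sets V_m with edge relations E_m such that each G_m is n-saturated, and let each p_m : V_{m+1} → V_m be a quotient map of graphs satisfying the lifting property: for every q < n, whenever v, v₁, …, v_q ∈ V_m are such that each v_r is adjacent to v in G_m, and w₁, …, w_q ∈ V_{m+1} satisfy p_m(w_r) = v_r for all r, there exists w ∈ V_{m+1} with p_m(w) = v adjacent in G_{m+1} to every w_r. Then the inverse limit graph G = (L, E), where L = {a ∈ Π_m V_m : ∀ m, a(m) = p_m(a(m+1))} and E(a,b) ⟺ ∀ m, E_m(a(m), b(m)), is n-saturated. -/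

import Mathlib

/-- `n`-saturation of a graph given by the edge relation `E`. -/
def IsNSaturated {V : Type*} (E : V → V → Prop) (n : ℕ) : Prop :=
  ∀ A : Finset V, A.card < n → ∀ f : V → Bool,
    ∃ x, x ∉ A ∧ ∀ a ∈ A, (E a x ↔ f a = true)

/-- The vertex set of the inverse limit of the system `(V_m, p_m)`: the set of coherent
sequences in `Π m, V m`. -/
abbrev InvLimVerts (V : ℕ → Type*) (p : ∀ m, V (m + 1) → V m) : Type _ :=
  {a : ∀ m, V m // ∀ m, a m = p m (a (m + 1))}

/-- The edge relation of the inverse limit graph: two coherent sequences are adjacent iff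
they are adjacent coordinatewise. -/
def InvLimEdge {V : ℕ → Type*} {p : ∀ m, V (m + 1) → V m}
    (E : ∀ m, V m → V m → Prop) (a b : InvLimVerts V p) : Prop :=
  ∀ m, E m (a.1 m) (b.1 m)

/-- A quotient map of graphs: a surjective strict homomorphism. A homomorphism `h` is
strict if every edge of the target between vertices in the range of `h` is the image of
an edge of the source. -/
def IsGraphQuotientMap {V W : Type*} (E : V → V → Prop) (E' : W → W → Prop)
    (h : V → W) : Prop :=
  Function.Surjective h ∧ (∀ a b, E a b → E' (h a) (h b)) ∧
    ∀ u v, E' u v → u ∈ Set.range h → v ∈ Set.range h →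
      ∃ a b, E a b ∧ h a = u ∧ h b = v

/-- Lifting a vertex at level `m` to a coherent sequence adjacent to given ones. -/
theorem exists_coherent_lift.{u} (q : ℕ) (m : ℕ) : ∀ (V : ℕ → Type u)
    (E : ∀ m, V m → V m → Prop) (p : ∀ m, V (m + 1) → V m)
    (_ : ∀ m a b, E (m + 1) a b → E m (p m a) (p m b))
    (_ : ∀ m, ∀ (v : V m) (vs : Fin q → V m),
      (∀ r, E m (vs r) v) → ∀ ws : Fin q → V (m + 1), (∀ r, p m (ws r) = vs r) →
        ∃ w : V (m + 1), p m w = v ∧ ∀ r, E (m + 1) (ws r) w)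
    (as : Fin q → ∀ m, V m) (_ : ∀ r m, as r m = p m (as r (m + 1)))
    (v : V m) (_ : ∀ r, E m (as r m) v),
    ∃ x : ∀ m, V m, (∀ m, x m = p m (x (m + 1))) ∧ x m = v ∧ ∀ r m, E m (as r m) (x m) := by
  induction m with
  | zero =>
    intro V E p _ hl as hc v hv
    have key : ∀ k (y : {y : V k // ∀ r, E k (as r k) y}),
        ∃ z : {z : V (k + 1) // ∀ r, E (k + 1) (as r (k + 1)) z}, p k z.1 = y.1 := by
      intro k y
      obtain ⟨w, h1, h2⟩ := hl k y.1 (fun r => as r k) y.2 (fun r => as r (k + 1))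
        (fun r => (hc r k).symm)
      exact ⟨⟨w, h2⟩, h1⟩
    choose F hF using key
    let X : ∀ k, {y : V k // ∀ r, E k (as r k) y} := fun k => Nat.rec ⟨v, hv⟩ F k
    exact ⟨fun k => (X k).1, fun k => (hF k (X k)).symm, rfl, fun r k => (X k).2 r⟩
  | succ m ih =>
    intro V E p hh hl as hc v hv
    obtain ⟨x, h1, h2, h3⟩ := ih (fun k => V (k + 1)) (fun k => E (k + 1)) (fun k => p (k + 1))
      (fun k => hh (k + 1)) (fun k => hl (k + 1)) (fun r k => as r (k + 1))
      (fun r k => hc r (k + 1)) v hv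
    refine ⟨fun k => Nat.casesOn k (p 0 (x 0)) x, ?_, h2, ?_⟩
    · intro k
      cases k with
      | zero => rfl
      | succ k => exact h1 k
    · intro r k
      cases k with
      | zero =>
        have := hh 0 _ _ (h3 r 0)
        rw [← hc r 0] at this
        exact this
      | succ k => exact h3 r k

/-- Finitely many coherent sequences are separated at some level. -/
theorem exists_sep_level {V : ℕ → Type*} {p : ∀ m, V (m + 1) → V m}
    (A : Finset (InvLimVerts V p)) :
    ∃ m, ∀ a ∈ A, ∀ b ∈ A, a.1 m = b.1 m → a = b := by
  have mono : ∀ (a b : InvLimVerts V p) (j k : ℕ), j ≤ k → a.1 k = b.1 k → a.1 j = b.1 j := by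
    intro a b j k hjk
    induction k, hjk using Nat.le_induction with
    | base => exact id
    | succ k _ ih => 
      intro h
      apply ih
      rw [a.2 k, b.2 k, h]
  have ex : ∀ a b : InvLimVerts V p, ∃ m, a.1 m = b.1 m → a = b := by
    intro a b
    by_contra! h
    exact (h 0).2 (Subtype.ext (funext fun m => (h m).1))
  choose N hN using ex
  refine ⟨A.sup fun a => A.sup fun b => N a b, fun a ha b hb h => hN a b (mono a b _ _ ?_ h)⟩
  exact (Finset.le_sup (f := fun b => N a b) hb).trans
    (Finset.le_sup (f := fun a => A.sup fun b => N a b) ha)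

/-- Fix `n ≥ 1`. Let `(G_m)` be `n`-saturated graphs on finite nonempty vertex sets and
let each bonding map `p_m : V_{m+1} → V_m` be a quotient map of graphs with the lifting
property: for every `q < n`, whenever `v, v₁, …, v_q ∈ V_m` with each `v_r` adjacent to
`v` in `G_m`, and `w₁, …, w_q ∈ V_{m+1}` satisfy `p_m (w_r) = v_r`, there is
`w ∈ V_{m+1}` with `p_m w = v` adjacent in `G_{m+1}` to every `w_r`. Then the inverse
limit graph is `n`-saturated. -/
theorem invLim_nSaturated
    (n : ℕ) (hn : 1 ≤ n)
    (V : ℕ → Type*) [∀ m, Fintype (V m)] [∀ m, Nonempty (V m)]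
    (E : ∀ m, V m → V m → Prop)
    (hsymm : ∀ m, Symmetric (E m)) (hrefl : ∀ m, Reflexive (E m))
    (hsat : ∀ m, IsNSaturated (E m) n)
    (p : ∀ m, V (m + 1) → V m)
    (hquot : ∀ m, IsGraphQuotientMap (E (m + 1)) (E m) (p m))
    (hlift : ∀ m, ∀ q : ℕ, q < n → ∀ (v : V m) (vs : Fin q → V m),
      (∀ r, E m (vs r) v) → ∀ ws : Fin q → V (m + 1), (∀ r, p m (ws r) = vs r) →
        ∃ w : V (m + 1), p m w = v ∧ ∀ r, E (m + 1) (ws r) w) :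
    IsNSaturated (InvLimEdge (p := p) E) n := by
  classical
  intro A hA f
  obtain ⟨m, hm⟩ := exists_sep_level A
  obtain ⟨v, hv1, hv2⟩ := hsat m (A.image fun a => a.1 m)
    (lt_of_le_of_lt Finset.card_image_le hA)
    (fun u => decide (∃ a ∈ A, a.1 m = u ∧ f a = true))
  have hv : ∀ a ∈ A, (E m (a.1 m) v ↔ f a = true) := by
    intro a ha
    rw [hv2 _ (Finset.mem_image_of_mem _ ha), decide_eq_true_iff]
    constructor
    · rintro ⟨b, hb, h, hf⟩
      rwa [hm b hb a ha h] at hf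
    · intro h
      exact ⟨a, ha, rfl, h⟩
  let B := A.filter fun a => f a = true
  have hB : B.card < n := lt_of_le_of_lt (Finset.card_filter_le _ _) hA
  let e := B.equivFin
  obtain ⟨x, h1, h2, h3⟩ := exists_coherent_lift B.card m V E p
    (fun m => (hquot m).2.1) (fun m => hlift m _ hB) (fun r => (e.symm r).1.1)
    (fun r => (e.symm r).1.2) v (fun r => by
      have := Finset.mem_filter.1 (e.symm r).2
      exact (hv _ this.1).2 this.2)
  refine ⟨⟨x, h1⟩, fun hx => hv1 (Finset.mem_image.2 ⟨_, hx, h2⟩), fun a ha => ⟨fun h => ?_, fun h => ?_⟩⟩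
  · have := h m
    rw [← hv a ha, ← h2]
    exact this
  · intro k
    have := h3 (e ⟨a, Finset.mem_filter.2 ⟨ha, h⟩⟩) k
    rw [Equiv.symm_apply_apply] at this
    exact this
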